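/- There exists δ > 0 such that for all real u, v, w with |u|, |v|, |w| < δ and all real z with 0 ≤ z < 1, ∑_{k ≥ n+s, n ≥ s ≥ 1} G_0(k,n,s;z) u^{k−n−s} v^{n−s} w^{s−1} = (z/(1−u)) · ₃F₂(α, β, 1; (3−u)/2, 3/2; z²), where α and β are the two (possibly complex) roots of X² − (1 − u/2 + v/2)X + (1 − u + v − uv + w)/4 = 0, and the series converges absolutely. -/

import Mathlib

open scoped BigOperators

/-- The multiple `t`-value of an index `K = (k₁, …, kₙ)` (a list of positive integers):
`t(K) = ∑_{m₁ > ⋯ > mₙ > 0, all mᵢ odd} 1 / (m₁^{k₁} ⋯ mₙ^{kₙ})`. -/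
noncomputable def multT (K : List ℕ) : ℝ :=
  ∑' m : Fin K.length → ℕ,
    if (∀ i, Odd (m i)) ∧ (∀ i j : Fin K.length, i < j → m j < m i) then
      ∏ i, ((m i : ℝ) ^ K.get i)⁻¹
    else 0

/-- The multiple `t`-star value of an index `K = (k₁, …, kₙ)`:
`t*(K) = ∑_{m₁ ≥ ⋯ ≥ mₙ > 0, all mᵢ odd} 1 / (m₁^{k₁} ⋯ mₙ^{kₙ})`. -/
noncomputable def multTStar (K : List ℕ) : ℝ :=
  ∑' m : Fin K.length → ℕ,
    if (∀ i, Odd (m i)) ∧ (∀ i j : Fin K.length, i < j → m j ≤ m i) then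
      ∏ i, ((m i : ℝ) ^ K.get i)⁻¹
    else 0

/-- An index (list of positive integers) is admissible if its first entry is `> 1`. -/
def Admissible (K : List ℕ) : Prop := (∀ i ∈ K, 1 ≤ i) ∧ 2 ≤ K.headI

instance : DecidablePred Admissible := fun K =>
  inferInstanceAs (Decidable ((∀ i ∈ K, 1 ≤ i) ∧ 2 ≤ K.headI))

/-- `G0h k n s` is the sum of multiple `t`-values over all admissible indices of
weight `k`, depth `n` and height `s`. -/
noncomputable def G0h (k n s : ℕ) : ℝ :=
  ∑' K : List ℕ,
    if Admissible K ∧ K.sum = k ∧ K.length = n ∧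
        K.countP (fun i => decide (2 ≤ i)) = s then
      multT K
    else 0

/-- `G0hStar k n s` is the sum of multiple `t`-star values over all admissible indices of
weight `k`, depth `n` and height `s`. -/
noncomputable def G0hStar (k n s : ℕ) : ℝ :=
  ∑' K : List ℕ,
    if Admissible K ∧ K.sum = k ∧ K.length = n ∧
        K.countP (fun i => decide (2 ≤ i)) = s then
      multTStar K
    else 0

/-- `G0d k n` is the sum of multiple `t`-values over all admissible indices of
weight `k` and depth `n`. -/
noncomputable def G0d (k n : ℕ) : ℝ :=
  ∑' K : List ℕ,
    if Admissible K ∧ K.sum = k ∧ K.length = n then multT K else 0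

/-- `G0dStar k n` is the sum of multiple `t`-star values over all admissible indices of
weight `k` and depth `n`. -/
noncomputable def G0dStar (k n : ℕ) : ℝ :=
  ∑' K : List ℕ,
    if Admissible K ∧ K.sum = k ∧ K.length = n then multTStar K else 0

/-- The single `t`-value `t(n) = ∑_{m odd, m > 0} 1 / m^n`. -/
noncomputable def tval (n : ℕ) : ℝ := ∑' m : ℕ, 1 / (2 * (m : ℝ) + 1) ^ n

/-- The ascending Pochhammer symbol `(a)ₙ = a (a+1) ⋯ (a+n-1)`. -/
noncomputable def poch (a : ℂ) (n : ℕ) : ℂ := ∏ i ∈ Finset.range n, (a + i)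

/-- The generalized hypergeometric function `₃F₂(a, b, c; d, e; z)`. -/
noncomputable def hyp3F2 (a b c d e z : ℂ) : ℂ :=
  ∑' n : ℕ, poch a n * poch b n * poch c n /
      ((n.factorial : ℂ) * poch d n * poch e n) * z ^ n

/-- The generalized hypergeometric function with upper parameters `as` and lower
parameters `bs`. -/
noncomputable def hypF (as bs : List ℂ) (z : ℂ) : ℂ :=
  ∑' n : ℕ, (as.map fun a => poch a n).prod /
      ((n.factorial : ℂ) * (bs.map fun b => poch b n).prod) * z ^ n

/-- The one-variable multiple polylogarithm
`L_K(z) = ∑_{m₁ > ⋯ > mₙ > 0, all mᵢ odd} z^{m₁} / (m₁^{k₁} ⋯ mₙ^{kₙ})`. -/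
noncomputable def Lt (K : List ℕ) (z : ℝ) : ℝ :=
  ∑' m : Fin K.length → ℕ,
    if h : (∀ i, Odd (m i)) ∧ (∀ i j : Fin K.length, i < j → m j < m i) ∧
        0 < K.length then
      z ^ (m ⟨0, h.2.2⟩) * ∏ i, ((m i : ℝ) ^ K.get i)⁻¹
    else 0

/-- The one-variable star multiple polylogarithm
`L*_K(z) = ∑_{m₁ ≥ ⋯ ≥ mₙ > 0, all mᵢ odd} z^{m₁} / (m₁^{k₁} ⋯ mₙ^{kₙ})`. -/
noncomputable def LtStar (K : List ℕ) (z : ℝ) : ℝ :=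
  ∑' m : Fin K.length → ℕ,
    if h : (∀ i, Odd (m i)) ∧ (∀ i j : Fin K.length, i < j → m j ≤ m i) ∧
        0 < K.length then
      z ^ (m ⟨0, h.2.2⟩) * ∏ i, ((m i : ℝ) ^ K.get i)⁻¹
    else 0

/-- `G0hz k n s z` is the sum of `L_K(z)` over all admissible indices `K` of
weight `k`, depth `n` and height `s`. -/
noncomputable def G0hz (k n s : ℕ) (z : ℝ) : ℝ :=
  ∑' K : List ℕ,
    if Admissible K ∧ K.sum = k ∧ K.length = n ∧
        K.countP (fun i => decide (2 ≤ i)) = s then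
      Lt K z
    else 0

/-- `G0hzStar k n s z` is the sum of `L*_K(z)` over all admissible indices `K` of
weight `k`, depth `n` and height `s`. -/
noncomputable def G0hzStar (k n s : ℕ) (z : ℝ) : ℝ :=
  ∑' K : List ℕ,
    if Admissible K ∧ K.sum = k ∧ K.length = n ∧
        K.countP (fun i => decide (2 ≤ i)) = s then
      LtStar K z
    else 0

/-!
Write `m_i = 2 j_i + 1`. Attaching the weight `w u^(k-2)` to an entry `k ≥ 2` and `v` to an entry
`1`, except that the first entry `k ≥ 2` gets `u^(k-2)`, turns the generating function into a sum
over all finite sequences of pairs `(k_i, j_i)` with `j_1 > ⋯ > j_n`. Summing first over everything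
below `j = j_1`, every `i < j` is either skipped or used with some entry `k`, which contributes the
factor `1 + v/(2i+1) + w/((2i+1)(2i+1-u))`. This factor equals
`(α+i)(β+i)/((1/2+i)((1-u)/2+i))`, so the product over `i < j` is a quotient of Pochhammer symbols,
and what remains is the hypergeometric series in `j`.
-/

open Filter Topology

/-! ### Sums over lists with decreasing positions -/

section DescendingLists

variable {α β ι κ M 𝕜 : Type*}

lemma hasSum_fst_mul_snd [RCLike 𝕜] {f : α → 𝕜} {g : β → 𝕜} {a b : 𝕜}
    (hf : HasSum f a) (hg : HasSum g b) :
    HasSum (fun x : α × β => f x.1 * g x.2) (a * b) :=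
  hf.mul hg (summable_mul_of_summable_norm hf.summable.norm hg.summable.norm)

/-- The lists of pairs (label, position) whose positions strictly decrease and are all `< N`. -/
def descendingBelow (ι : Type*) (N : ℕ) : Set (List (ι × ℕ)) :=
  {l | (∀ x ∈ l, x.2 < N) ∧ l.Pairwise fun x y => y.2 < x.2}

/-- The lists of pairs (label, position) whose positions strictly decrease. -/
def descendingLists (ι : Type*) : Set (List (ι × ℕ)) :=
  {l | l.Pairwise fun x y => y.2 < x.2}

lemma cons_mem_descendingLists {x : ι × ℕ} {l : List (ι × ℕ)} :
    x :: l ∈ descendingLists ι ↔ l ∈ descendingBelow ι x.2 :=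
  List.pairwise_cons

lemma nil_mem_descendingBelow (N : ℕ) : [] ∈ descendingBelow ι N :=
  ⟨by simp, .nil⟩

lemma cons_mem_descendingBelow {N : ℕ} {x : ι × ℕ} {l : List (ι × ℕ)} :
    x :: l ∈ descendingBelow ι N ↔ x.2 < N ∧ l ∈ descendingBelow ι x.2 := by
  simp only [descendingBelow, Set.mem_ofPred_eq, List.forall_mem_cons, List.pairwise_cons]
  exact ⟨fun ⟨⟨hx, _⟩, h⟩ => ⟨hx, h⟩,
    fun ⟨hx, hl, h⟩ => ⟨⟨hx, fun y hy => (hl y hy).trans hx⟩, hl, h⟩⟩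

lemma descendingBelow_zero : descendingBelow ι 0 = {[]} := by
  ext l
  cases l <;> simp [nil_mem_descendingBelow, cons_mem_descendingBelow]

lemma descendingBelow_succ (N : ℕ) :
    descendingBelow ι (N + 1) = descendingBelow ι N ∪
      Set.range fun x : ι × descendingBelow ι N => (x.1, N) :: x.2.1 := by
  ext l
  rcases l with _ | ⟨⟨k, j⟩, l⟩
  · simp [nil_mem_descendingBelow]
  · simp only [Set.mem_union, cons_mem_descendingBelow, Set.mem_range, Prod.exists,
      Subtype.exists, List.cons.injEq, Prod.mk.injEq, Order.lt_add_one_iff]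
    constructor
    · rintro ⟨hj, hl⟩
      rcases hj.lt_or_eq with hj | rfl
      · exact .inl ⟨hj, hl⟩
      · exact .inr ⟨k, l, hl, ⟨rfl, rfl⟩, rfl⟩
    · rintro (⟨hj, hl⟩ | ⟨_, _, hl, ⟨_, rfl⟩, rfl⟩)
      · exact ⟨hj.le, hl⟩
      · exact ⟨le_rfl, hl⟩

lemma hasSum_descendingBelow [RCLike 𝕜] {f : ι × ℕ → 𝕜}
    (hf : ∀ j, Summable fun k => f (k, j)) (N : ℕ) :
    HasSum (fun l : descendingBelow ι N => (l.1.map f).prod)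
      (∏ j ∈ Finset.range N, (1 + ∑' k, f (k, j))) := by
  induction N with
  | zero =>
    rw [descendingBelow_zero]
    simpa using hasSum_unique fun l : ({[]} : Set (List (ι × ℕ))) => (l.1.map f).prod
  | succ N ih =>
    have cons_injective : Function.Injective
        fun x : ι × descendingBelow ι N => (x.1, N) :: x.2.1 := by
      rintro ⟨k, l⟩ ⟨k', l'⟩ h
      simpa [Subtype.ext_iff] using h
    have sum_cons := (cons_injective.hasSum_range_iff (f := fun l => (l.map f).prod)).2 <| by
      simpa [Function.comp_def] using hasSum_fst_mul_snd (hf N).hasSum ih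
    have disjoint : Disjoint (descendingBelow ι N)
        (Set.range fun x : ι × descendingBelow ι N => (x.1, N) :: x.2.1) := by
      rw [Set.disjoint_right]
      rintro _ ⟨x, rfl⟩ h
      exact (cons_mem_descendingBelow.1 h).1.false
    rw [descendingBelow_succ, Finset.prod_range_succ, mul_one_add, mul_comm _ (∑' k, f (k, N))]
    exact HasSum.add_disjoint (f := fun l : List (ι × ℕ) => (l.map f).prod) disjoint ih sum_cons

/-- The product of the entries of a list, weighing the head by `g` and the tail by `f`; the empty
list, which has no head, is given the value `0`. -/
def headTailProd [MonoidWithZero M] (g f : α → M) : List α → M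
  | [] => 0
  | x :: l => g x * (l.map f).prod

lemma hasSum_sigma_descendingBelow [RCLike 𝕜] {g f : ι × ℕ → 𝕜}
    (hg : ∀ j, Summable fun k => g (k, j)) (hf : ∀ j, Summable fun k => f (k, j))
    (hgf : Summable fun j => (∑' k, ‖g (k, j)‖) *
      ∏ i ∈ Finset.range j, (1 + ∑' k, ‖f (k, i)‖)) :
    HasSum (fun x : Σ j : ℕ, ι × descendingBelow ι j =>
        g (x.2.1, x.1) * (x.2.2.1.map f).prod)
      (∑' j, (∑' k, g (k, j)) * ∏ i ∈ Finset.range j, (1 + ∑' k, f (k, i))) := by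
  have hasSum_fiber (j : ℕ) := hasSum_fst_mul_snd (hg j).hasSum (hasSum_descendingBelow hf j)
  have hasSum_norm_fiber (j : ℕ) := hasSum_fst_mul_snd (hg j).norm.hasSum
    (hasSum_descendingBelow (f := fun x => ‖f x‖) (fun j => (hf j).norm) j)
  have summable_sigma : Summable fun x : Σ j : ℕ, ι × descendingBelow ι j =>
      g (x.2.1, x.1) * (x.2.2.1.map f).prod := by
    refine .of_norm ((summable_sigma_of_nonneg fun _ => norm_nonneg _).2 ?_)
    simp only [norm_mul, List.norm_prod, List.map_map, Function.comp_def]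
    exact ⟨fun j => (hasSum_norm_fiber j).summable,
      hgf.congr fun j => (hasSum_norm_fiber j).tsum_eq.symm⟩
  convert summable_sigma.hasSum using 1
  rw [summable_sigma.tsum_sigma]
  exact tsum_congr fun j => (hasSum_fiber j).tsum_eq.symm

lemma hasSum_headTailProd_of_descending [RCLike 𝕜] {g f : ι × ℕ → 𝕜}
    (hg : ∀ j, Summable fun k => g (k, j)) (hf : ∀ j, Summable fun k => f (k, j))
    (hgf : Summable fun j => (∑' k, ‖g (k, j)‖) *
      ∏ i ∈ Finset.range j, (1 + ∑' k, ‖f (k, i)‖)) :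
    HasSum ((descendingLists ι).indicator (headTailProd g f))
      (∑' j, (∑' k, g (k, j)) * ∏ i ∈ Finset.range j, (1 + ∑' k, f (k, i))) := by
  have cons_injective : Function.Injective
      fun x : Σ j : ℕ, ι × descendingBelow ι j => (x.2.1, x.1) :: x.2.2.1 := by
    rintro ⟨j, k, l, hl⟩ ⟨j', k', l', hl'⟩ h
    obtain ⟨⟨rfl, rfl⟩, rfl⟩ : (k = k' ∧ j = j') ∧ l = l' := by simpa using h
    rfl
  rw [← cons_injective.hasSum_iff]
  · convert hasSum_sigma_descendingBelow hg hf hgf with x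
    exact Set.indicator_of_mem (cons_mem_descendingLists.2 x.2.2.2) _
  · rintro (_ | ⟨⟨k, j⟩, l⟩) hl
    · simp [headTailProd]
    · exact Set.indicator_of_notMem
        (fun h => hl ⟨⟨j, k, l, cons_mem_descendingLists.1 h⟩, rfl⟩) _

/-- A list of pairs is the list of its first components together with the family of its second
components. -/
def listProdEquiv : (Σ K : List ι, Fin K.length → κ) ≃ List (ι × κ) where
  toFun x := List.ofFn fun i => (x.1.get i, x.2 i)
  invFun l := ⟨l.map Prod.fst, fun i => (l.get (i.cast (List.length_map _))).2⟩
  left_inv := by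
    rintro ⟨K, j⟩
    refine Sigma.ext (by simp [List.map_ofFn, Function.comp_def]) ?_
    refine (Fin.heq_fun_iff (by simp)).2 fun i => ?_
    simp
  right_inv l := List.ext_getElem (by simp) (by simp)

end DescendingLists

lemma summable_pow_mul_prod_one_add {𝕜 : Type*} [RCLike 𝕜] {r : 𝕜} {a : ℕ → 𝕜} (hr : ‖r‖ < 1)
    (ha : Tendsto a atTop (𝓝 0)) :
    Summable fun n => r ^ n * ∏ i ∈ Finset.range n, (1 + a i) := by
  have tendsto_ratio : Tendsto (fun n => ‖r * (1 + a n)‖) atTop (𝓝 ‖r‖) := by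
    simpa using ((ha.const_add 1).const_mul r).norm
  obtain ⟨s, hrs, hs⟩ := exists_between hr
  refine summable_of_ratio_norm_eventually_le hs ?_
  filter_upwards [tendsto_ratio.eventually_le_const hrs] with n hn
  calc ‖r ^ (n + 1) * ∏ i ∈ Finset.range (n + 1), (1 + a i)‖
      = ‖r * (1 + a n)‖ * ‖r ^ n * ∏ i ∈ Finset.range n, (1 + a i)‖ := by
        rw [← norm_mul, pow_succ, Finset.prod_range_succ]
        ring_nf
    _ ≤ s * ‖r ^ n * ∏ i ∈ Finset.range n, (1 + a i)‖ := by gcongr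

/-! ### Weights of the entries of an index -/

/-- The factor of `u^(k-n-s) v^(n-s) w^s` contributed by an entry of an index: `v` for an entry `1`,
`w u^(k-2)` for an entry `k ≥ 2`, and `0` for the entry `0`, which does not occur in an index. -/
def entryWeight {R : Type*} [MonoidWithZero R] (u v w : R) : ℕ → R
  | 0 => 0
  | 1 => v
  | k + 2 => w * u ^ k

/-- The sum over `k` of the weights `entryWeight u v w k / m ^ k` at the odd number
`m = 2 * j + 1`, in closed form. -/
def entrySum {𝕜 : Type*} [Field 𝕜] (u v w : 𝕜) (j : ℕ) : 𝕜 :=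
  v / (2 * j + 1) + w / ((2 * j + 1) * (2 * j + 1 - u))

section EntrySum

variable {𝕜 : Type*} [RCLike 𝕜] {u : 𝕜}

lemma norm_entryWeight (u v w : 𝕜) (k : ℕ) :
    ‖entryWeight u v w k‖ = entryWeight ‖u‖ ‖v‖ ‖w‖ k := by
  rcases k with _ | _ | k <;> simp [entryWeight]

lemma norm_two_mul_natCast_add_one (j : ℕ) : ‖(2 * j + 1 : 𝕜)‖ = 2 * j + 1 := by
  exact_mod_cast RCLike.norm_natCast (K := 𝕜) (2 * j + 1)

lemma two_mul_natCast_add_one_ne_zero (j : ℕ) : (2 * j + 1 : 𝕜) ≠ 0 := by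
  exact_mod_cast (2 * j).succ_ne_zero

lemma norm_lt_norm_two_mul_natCast_add_one (hu : ‖u‖ < 1) (j : ℕ) : ‖u‖ < ‖(2 * j + 1 : 𝕜)‖ := by
  rw [norm_two_mul_natCast_add_one]
  linarith [j.cast_nonneg (α := ℝ)]

lemma two_mul_natCast_add_one_sub_ne_zero (hu : ‖u‖ < 1) (j : ℕ) : (2 * j + 1 - u : 𝕜) ≠ 0 :=
  sub_ne_zero.2 fun h => (norm_lt_norm_two_mul_natCast_add_one hu j).ne (by rw [h])

lemma hasSum_entryWeight_mul_inv_pow {m : 𝕜} (v w : 𝕜) (hu : ‖u‖ < ‖m‖) :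
    HasSum (fun k => entryWeight u v w k * (m ^ k)⁻¹) (v / m + w / (m * (m - u))) := by
  have hm : m ≠ 0 := norm_pos_iff.1 ((norm_nonneg u).trans_lt hu)
  have hmu : m - u ≠ 0 := sub_ne_zero.2 fun h => hu.ne (by rw [h])
  have hratio : ‖u / m‖ < 1 := by rwa [norm_div, div_lt_one (norm_pos_iff.2 hm)]
  have terms (k : ℕ) :
      entryWeight u v w (k + 2) * (m ^ (k + 2))⁻¹ = w / m ^ 2 * (u / m) ^ k := by
    simp only [entryWeight, div_pow]
    field_simp
    ring
  have value : v / m + w / (m * (m - u)) - ∑ k ∈ Finset.range 2, entryWeight u v w k * (m ^ k)⁻¹ =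
      w / m ^ 2 * (1 - u / m)⁻¹ := by
    simp only [Finset.sum_range_succ, Finset.sum_range_zero, entryWeight, one_sub_div hm]
    field_simp
    ring
  rw [← hasSum_nat_add_iff' 2, value]
  simpa only [terms] using (hasSum_geometric_of_norm_lt_one hratio).mul_left (w / m ^ 2)

lemma hasSum_entrySum (hu : ‖u‖ < 1) (v w : 𝕜) (j : ℕ) :
    HasSum (fun k => entryWeight u v w k * ((2 * j + 1 : 𝕜) ^ k)⁻¹) (entrySum u v w j) :=
  hasSum_entryWeight_mul_inv_pow v w (norm_lt_norm_two_mul_natCast_add_one hu j)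

lemma tsum_norm_entryWeight (hu : ‖u‖ < 1) (v w : 𝕜) (j : ℕ) :
    ∑' k, ‖entryWeight u v w k * ((2 * j + 1 : 𝕜) ^ k)⁻¹‖ = entrySum ‖u‖ ‖v‖ ‖w‖ j := by
  simp only [norm_mul, norm_inv, norm_pow, norm_entryWeight, norm_two_mul_natCast_add_one]
  exact (hasSum_entrySum (by rwa [norm_norm]) _ _ j).tsum_eq

lemma tendsto_entrySum (u v w : ℝ) : Tendsto (entrySum u v w) atTop (𝓝 0) := by
  have tendsto_odd : Tendsto (fun j : ℕ => 2 * (j : ℝ) + 1) atTop atTop :=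
    tendsto_atTop_add_const_right _ _ (tendsto_natCast_atTop_atTop.const_mul_atTop two_pos)
  have tendsto_odd_sub : Tendsto (fun j : ℕ => 2 * (j : ℝ) + 1 - u) atTop atTop :=
    tendsto_atTop_add_const_right _ (-u) tendsto_odd
  simpa only [add_zero, ← entrySum.eq_1] using (tendsto_odd.const_div_atTop v).add
    ((tendsto_odd.atTop_mul_atTop₀ tendsto_odd_sub).const_div_atTop w)

lemma summable_pow_mul_entrySum_mul_prod {z : ℝ} (hz : |z| < 1) (u v w v' w' : ℝ) :
    Summable fun j => z ^ (2 * j + 1) * entrySum u v w j *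
      ∏ i ∈ Finset.range j, (1 + entrySum u v' w' i) := by
  have hz2 : ‖z ^ 2‖ < 1 := by
    rw [norm_pow]
    exact pow_lt_one₀ (norm_nonneg z) hz two_ne_zero
  have bounded : (fun j => z * entrySum u v w j) =O[atTop] fun _ => (1 : ℝ) :=
    ((tendsto_entrySum u v w).const_mul z).isBigO_one ℝ
  refine summable_of_isBigO_nat
    (summable_pow_mul_prod_one_add hz2 (tendsto_entrySum u v' w')) ?_
  refine (bounded.mul (Asymptotics.isBigO_refl _ _)).congr (fun j => ?_) fun j => one_mul _
  ring

end EntrySum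

/-! ### Multiple polylogarithms -/

lemma Lt_cons (k : ℕ) (K : List ℕ) (z : ℝ) :
    Lt (k :: K) z = ∑' j : Fin (K.length + 1) → ℕ, if StrictAnti j then
      z ^ (2 * j 0 + 1) * ∏ i, ((2 * (j i : ℝ) + 1) ^ (k :: K).get i)⁻¹ else 0 := by
  have odd_injective :
      Function.Injective fun (j : Fin (k :: K).length → ℕ) i => 2 * j i + 1 := by
    intro j j' h
    ext i
    simpa using congrFun h i
  rw [Lt, ← odd_injective.tsum_eq]
  · refine tsum_congr fun j => ?_
    have h_iff : StrictAnti j ↔ (∀ i, Odd (2 * j i + 1)) ∧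
        (∀ i i' : Fin (k :: K).length, i < i' → 2 * j i' + 1 < 2 * j i + 1) ∧
          0 < (k :: K).length := by
      simp [StrictAnti]
    by_cases hj : StrictAnti j
    · rw [dif_pos (h_iff.1 hj), if_pos hj]
      push_cast
      rfl
    · rw [dif_neg (mt h_iff.2 hj), if_neg hj]
  · intro m hm
    have hodd : ∀ i, Odd (m i) := by
      by_contra h
      exact hm (dif_neg fun h' => h h'.1)
    choose j hj using hodd
    exact ⟨j, funext fun i => (hj i).symm⟩

section Lt

variable {u : ℂ} {z : ℝ}

/-- The summand of `z^m₁ / (m₁^k₁ ⋯ mₙ^kₙ)`, weighted by `c₀ k₁ * c k₂ * ⋯ * c kₙ`, as a function of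
the list of pairs `(kᵢ, jᵢ)`, where `mᵢ = 2 * jᵢ + 1`. -/
noncomputable def polylogTerm (c₀ c : ℕ → ℂ) (z : ℝ) : List (ℕ × ℕ) → ℂ :=
  headTailProd (fun x => (z : ℂ) ^ (2 * x.2 + 1) * (c₀ x.1 * ((2 * x.2 + 1 : ℂ) ^ x.1)⁻¹))
    fun x => c x.1 * ((2 * x.2 + 1 : ℂ) ^ x.1)⁻¹

lemma polylogTerm_listProdEquiv (c₀ c : ℕ → ℂ) (z : ℝ) (k : ℕ) (K : List ℕ)
    (j : Fin (K.length + 1) → ℕ) :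
    polylogTerm c₀ c z (listProdEquiv ⟨k :: K, j⟩) = headTailProd c₀ c (k :: K) *
      (z ^ (2 * j 0 + 1) * ∏ i, ((2 * (j i : ℝ) + 1) ^ (k :: K).get i)⁻¹ : ℝ) := by
  have prod_entries : ∏ i : Fin K.length, c K[i.1] = (K.map c).prod :=
    Fin.prod_univ_fun_getElem K c
  have cons_eq : listProdEquiv ⟨k :: K, j⟩ =
      (k, j 0) :: List.ofFn fun i : Fin K.length => (K[i.1], j i.succ) :=
    List.ofFn_succ
  rw [cons_eq, polylogTerm, headTailProd, headTailProd, ← prod_entries, List.map_ofFn,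
    List.prod_ofFn, Fin.prod_univ_succ]
  simp only [Function.comp_apply, Finset.prod_mul_distrib]
  push_cast
  simp only [Fin.prod_univ_fun_getElem, Finset.prod_inv_distrib, List.get_eq_getElem,
    List.length_cons, Fin.val_zero, List.getElem_cons_zero, Fin.val_succ, List.getElem_cons_succ]
  ring

lemma tsum_polylogTerm (c₀ c : ℕ → ℂ) (z : ℝ) (K : List ℕ) :
    ∑' j : Fin K.length → ℕ,
        (descendingLists ℕ).indicator (polylogTerm c₀ c z)
          (listProdEquiv ⟨K, j⟩) = headTailProd c₀ c K * Lt K z := by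
  rcases K with _ | ⟨k, K⟩
  · simp [polylogTerm, headTailProd, listProdEquiv]
  · have mem_iff (j : Fin (k :: K).length → ℕ) :
        listProdEquiv ⟨k :: K, j⟩ ∈ descendingLists ℕ ↔ StrictAnti j :=
      List.pairwise_ofFn
    classical
    rw [Lt_cons, Complex.ofReal_tsum, ← tsum_mul_left]
    refine tsum_congr fun j => ?_
    simp only [Set.indicator_apply, mem_iff]
    split_ifs
    · exact polylogTerm_listProdEquiv c₀ c z k K j
    · simp

lemma hasSum_headTailProd_entryWeight_mul_Lt (hu : ‖u‖ < 1) (v w : ℂ) (hz : |z| < 1) :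
    HasSum (fun K => headTailProd (entryWeight u 0 1) (entryWeight u v w) K * (Lt K z : ℂ))
      (∑' j, (z : ℂ) ^ (2 * j + 1) * entrySum u 0 1 j *
        ∏ i ∈ Finset.range j, (1 + entrySum u v w i)) := by
  have hasSum_head (j : ℕ) := (hasSum_entrySum hu 0 1 j).mul_left ((z : ℂ) ^ (2 * j + 1))
  have hasSum_tail := hasSum_entrySum hu v w
  have hasSum_lists := hasSum_headTailProd_of_descending
    (g := fun x => (z : ℂ) ^ (2 * x.2 + 1) * (entryWeight u 0 1 x.1 * ((2 * x.2 + 1 : ℂ) ^ x.1)⁻¹))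
    (f := fun x => entryWeight u v w x.1 * ((2 * x.2 + 1 : ℂ) ^ x.1)⁻¹)
    (fun j => (hasSum_head j).summable) (fun j => (hasSum_tail j).summable) <| by
      simp only [norm_mul ((z : ℂ) ^ _), tsum_mul_left, tsum_norm_entryWeight hu, norm_pow,
        Complex.norm_real]
      exact summable_pow_mul_entrySum_mul_prod (by simpa using hz) _ _ _ _ _
  simp only [(hasSum_head _).tsum_eq, (hasSum_tail _).tsum_eq] at hasSum_lists
  have hasSum_sigma := listProdEquiv.hasSum_iff.2 hasSum_lists
  have hasSum_indices :=
    hasSum_sigma.sigma fun K => (hasSum_sigma.summable.sigma_factor K).hasSum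
  exact hasSum_indices.congr_fun fun K => (tsum_polylogTerm _ _ z K).symm

end Lt

/-! ### Grouping the indices by weight, depth and height -/

/-- The number of entries `≥ 2` of an index, in the form used in `G0hz`. -/
abbrev indexHeight (K : List ℕ) : ℕ := K.countP fun i => decide (2 ≤ i)

lemma indexHeight_one_cons (K : List ℕ) : indexHeight (1 :: K) = indexHeight K := by
  simp [indexHeight]

lemma indexHeight_add_two_cons (k : ℕ) (K : List ℕ) :
    indexHeight ((k + 2) :: K) = indexHeight K + 1 := by
  simp [indexHeight]

/-- The exponents `(k - n - s, n - s, s - 1)` of `u`, `v`, `w` attached to an index of weight `k`,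
depth `n` and height `s`. For admissible indices none of the subtractions is truncated. -/
def indexExponents (K : List ℕ) : ℕ × ℕ × ℕ :=
  (K.sum - K.length - indexHeight K, K.length - indexHeight K, indexHeight K - 1)

lemma length_add_indexHeight_le_sum {K : List ℕ} (hK : ∀ i ∈ K, 1 ≤ i) :
    K.length + indexHeight K ≤ K.sum := by
  induction K with
  | nil => simp
  | cons k K ih =>
    obtain ⟨hk, hK⟩ := List.forall_mem_cons.1 hK
    have := ih hK
    simp only [indexHeight, List.length_cons, List.countP_cons, List.sum_cons] at this ⊢
    split_ifs with h <;> simp only [decide_eq_true_eq] at h <;> omega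

lemma Admissible.one_le_indexHeight {K : List ℕ} (hK : Admissible K) : 1 ≤ indexHeight K := by
  rcases K with _ | ⟨k, K⟩
  · exact absurd hK.2 (by simp)
  · exact List.countP_pos_iff.2 ⟨k, by simp, by simpa using hK.2⟩

lemma Admissible.indexExponents_eq_iff {K : List ℕ} (hK : Admissible K) {p : ℕ × ℕ × ℕ} :
    indexExponents K = p ↔ K.sum = p.1 + p.2.1 + 2 * p.2.2 + 2 ∧
      K.length = p.2.1 + p.2.2 + 1 ∧ indexHeight K = p.2.2 + 1 := by
  have := length_add_indexHeight_le_sum hK.1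
  have := hK.one_le_indexHeight
  have : indexHeight K ≤ K.length := List.countP_le_length
  simp only [indexExponents, Prod.ext_iff]
  omega

section Monomials

variable {R : Type*} [CommSemiring R]

lemma prod_map_entryWeight (u v w : R) {K : List ℕ} (hK : ∀ i ∈ K, 1 ≤ i) :
    (K.map (entryWeight u v w)).prod =
      u ^ (K.sum - K.length - indexHeight K) * v ^ (K.length - indexHeight K) *
        w ^ indexHeight K := by
  induction K with
  | nil => simp
  | cons k K ih =>
    obtain ⟨hk, hK⟩ := List.forall_mem_cons.1 hK
    have h_sum := length_add_indexHeight_le_sum hK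
    have h_length : indexHeight K ≤ K.length := List.countP_le_length
    rw [List.map_cons, List.prod_cons, ih hK]
    obtain _ | _ | k := k
    · simp at hk
    · rw [indexHeight_one_cons, List.sum_cons, List.length_cons, Nat.sub_add_comm h_length,
        Nat.add_comm 1, Nat.add_sub_add_right, entryWeight]
      ring
    · have exponent_cons : (k + 2) + K.sum - (K.length + 1) - (indexHeight K + 1) =
          k + (K.sum - K.length - indexHeight K) := by omega
      rw [indexHeight_add_two_cons, List.sum_cons, List.length_cons, exponent_cons,
        Nat.add_sub_add_right, entryWeight]
      ring

lemma headTailProd_entryWeight_of_admissible (u v w : R) {K : List ℕ} (hK : Admissible K) :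
    headTailProd (entryWeight u 0 1) (entryWeight u v w) K =
      u ^ (indexExponents K).1 * v ^ (indexExponents K).2.1 * w ^ (indexExponents K).2.2 := by
  obtain _ | ⟨_ | _ | k, K⟩ := K
  · simp [Admissible] at hK
  · simp [Admissible] at hK
  · simp [Admissible] at hK
  · have tail_pos : ∀ i ∈ K, 1 ≤ i := (List.forall_mem_cons.1 hK.1).2
    have h_sum := length_add_indexHeight_le_sum tail_pos
    have exponents_cons : indexExponents ((k + 2) :: K) =
        (k + (K.sum - K.length - indexHeight K), K.length - indexHeight K, indexHeight K) := by
      simp only [indexExponents, indexHeight_add_two_cons, List.sum_cons, List.length_cons,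
        Prod.mk.injEq]
      omega
    rw [headTailProd, prod_map_entryWeight u v w tail_pos, exponents_cons, entryWeight]
    ring

lemma headTailProd_entryWeight_of_not_admissible (u v w : R) {K : List ℕ}
    (hK : ¬ Admissible K) : headTailProd (entryWeight u 0 1) (entryWeight u v w) K = 0 := by
  obtain _ | ⟨_ | _ | k, K⟩ := K
  · rfl
  · simp [headTailProd, entryWeight]
  · simp [headTailProd, entryWeight]
  · have zero_mem : 0 ∈ K := by
      by_contra h
      refine hK ⟨List.forall_mem_cons.2 ⟨by omega, fun i hi => ?_⟩, by simp⟩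
      exact Nat.one_le_iff_ne_zero.2 fun h0 => h (h0 ▸ hi)
    rw [headTailProd, List.prod_eq_zero (List.mem_map.2 ⟨0, zero_mem, rfl⟩), mul_zero]

end Monomials

lemma tsum_indexExponents_fiber (u v w : ℂ) (z : ℝ) (p : ℕ × ℕ × ℕ) :
    ∑' K : indexExponents ⁻¹' {p},
        headTailProd (entryWeight u 0 1) (entryWeight u v w) K * (Lt K z : ℂ) =
      G0hz (p.1 + p.2.1 + 2 * p.2.2 + 2) (p.2.1 + p.2.2 + 1) (p.2.2 + 1) z *
        u ^ p.1 * v ^ p.2.1 * w ^ p.2.2 := by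
  rw [tsum_subtype (indexExponents ⁻¹' {p}) fun K =>
      headTailProd (entryWeight u 0 1) (entryWeight u v w) K * (Lt K z : ℂ),
    G0hz, Complex.ofReal_tsum, ← tsum_mul_right, ← tsum_mul_right, ← tsum_mul_right]
  refine tsum_congr fun K => ?_
  by_cases hK : Admissible K
  · simp only [hK, true_and, ← hK.indexExponents_eq_iff]
    by_cases hp : indexExponents K = p
    · rw [Set.indicator_of_mem (by simpa using hp), if_pos hp,
        headTailProd_entryWeight_of_admissible u v w hK, hp]
      ring
    · rw [Set.indicator_of_notMem (by simpa using hp), if_neg hp]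
      simp
  · simp [hK, headTailProd_entryWeight_of_not_admissible u v w hK]

lemma hasSum_G0hz {u : ℂ} (hu : ‖u‖ < 1) (v w : ℂ) {z : ℝ} (hz : |z| < 1) :
    HasSum (fun p : ℕ × ℕ × ℕ =>
        (G0hz (p.1 + p.2.1 + 2 * p.2.2 + 2) (p.2.1 + p.2.2 + 1) (p.2.2 + 1) z : ℂ) *
          u ^ p.1 * v ^ p.2.1 * w ^ p.2.2)
      (∑' j, (z : ℂ) ^ (2 * j + 1) * entrySum u 0 1 j *
        ∏ i ∈ Finset.range j, (1 + entrySum u v w i)) := by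
  simpa only [tsum_indexExponents_fiber] using
    (hasSum_headTailProd_entryWeight_mul_Lt hu v w hz).tsum_fiberwise indexExponents

/-! ### The hypergeometric series -/

lemma poch_one (n : ℕ) : poch 1 n = n.factorial := by
  simp only [poch, ← Finset.prod_range_add_one_eq_factorial, Nat.cast_prod, Nat.cast_add,
    Nat.cast_one, add_comm]

lemma mul_poch_add_one (a : ℂ) (n : ℕ) : a * poch (a + 1) n = poch a n * (a + n) := by
  have h := (Finset.prod_range_succ' (fun i : ℕ => a + i) n).symm.trans
    (Finset.prod_range_succ _ n)
  simp only [Nat.cast_add, Nat.cast_one, Nat.cast_zero, add_zero] at h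
  rw [poch, poch, ← h, mul_comm]
  simp only [add_assoc, add_comm (1 : ℂ)]

section Hypergeometric

variable {u v w α β : ℂ}

lemma one_add_entrySum (hu : ‖u‖ < 1) (h_add : α + β = 1 - u / 2 + v / 2)
    (h_mul : α * β = (1 - u + v - u * v + w) / 4) (i : ℕ) :
    1 + entrySum u v w i = (α + i) * (β + i) / ((1 / 2 + i) * ((1 - u) / 2 + i)) := by
  have h_odd := two_mul_natCast_add_one_ne_zero (𝕜 := ℂ) i
  have h_odd_sub := two_mul_natCast_add_one_sub_ne_zero hu i
  have numerator : (α + i) * (β + i) =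
      ((2 * i + 1) * (2 * i + 1 - u) + v * (2 * i + 1 - u) + w) / 4 := by
    linear_combination (i : ℂ) * h_add + h_mul
  have denominator : (1 / 2 + i) * ((1 - u) / 2 + i) = (2 * i + 1) * (2 * i + 1 - u) / 4 := by
    ring
  rw [numerator, denominator, entrySum]
  field_simp
  ring

lemma prod_one_add_entrySum (hu : ‖u‖ < 1) (h_add : α + β = 1 - u / 2 + v / 2)
    (h_mul : α * β = (1 - u + v - u * v + w) / 4) (n : ℕ) :
    ∏ i ∈ Finset.range n, (1 + entrySum u v w i) =
      poch α n * poch β n / (poch (1 / 2) n * poch ((1 - u) / 2) n) := by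
  simp only [one_add_entrySum hu h_add h_mul, poch, Finset.prod_div_distrib,
    Finset.prod_mul_distrib]

lemma entrySum_div_poch (u : ℂ) (n : ℕ) :
    entrySum u 0 1 n / (poch (1 / 2) n * poch ((1 - u) / 2) n) =
      1 / (1 - u) / (poch ((3 - u) / 2) n * poch (3 / 2) n) := by
  have shift_half : poch (3 / 2) n = (2 * n + 1) * poch (1 / 2) n := by
    have h := mul_poch_add_one (1 / 2) n
    norm_num only at h
    linear_combination 2 * h
  have shift_half_sub : (1 - u) * poch ((3 - u) / 2) n =
      (2 * n + 1 - u) * poch ((1 - u) / 2) n := by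
    have h := mul_poch_add_one ((1 - u) / 2) n
    rw [show (1 - u) / 2 + 1 = (3 - u) / 2 by ring] at h
    linear_combination 2 * h
  rw [div_div, ← mul_assoc, shift_half_sub, shift_half, entrySum, zero_div, zero_add, div_div]
  ring

lemma tsum_entrySum_eq_hyp3F2 (hu : ‖u‖ < 1) (h_add : α + β = 1 - u / 2 + v / 2)
    (h_mul : α * β = (1 - u + v - u * v + w) / 4) (z : ℂ) :
    ∑' j, z ^ (2 * j + 1) * entrySum u 0 1 j * ∏ i ∈ Finset.range j, (1 + entrySum u v w i) =
      z / (1 - u) * hyp3F2 α β 1 ((3 - u) / 2) (3 / 2) (z ^ 2) := by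
  rw [hyp3F2, ← tsum_mul_left]
  refine tsum_congr fun n => ?_
  have h_factorial : (n.factorial : ℂ) ≠ 0 := Nat.cast_ne_zero.2 n.factorial_ne_zero
  calc z ^ (2 * n + 1) * entrySum u 0 1 n * ∏ i ∈ Finset.range n, (1 + entrySum u v w i)
      = z ^ (2 * n + 1) * (poch α n * poch β n) *
          (entrySum u 0 1 n / (poch (1 / 2) n * poch ((1 - u) / 2) n)) := by
        rw [prod_one_add_entrySum hu h_add h_mul]
        ring
    _ = z ^ (2 * n + 1) * (poch α n * poch β n) *
          (1 / (1 - u) / (poch ((3 - u) / 2) n * poch (3 / 2) n)) := by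
        rw [entrySum_div_poch]
    _ = z / (1 - u) * (poch α n * poch β n * poch 1 n /
          (n.factorial * poch ((3 - u) / 2) n * poch (3 / 2) n) * (z ^ 2) ^ n) := by
        rw [poch_one, mul_comm (poch α n * poch β n) (n.factorial : ℂ),
          mul_assoc (n.factorial : ℂ), mul_div_mul_left _ _ h_factorial]
        ring

end Hypergeometric

theorem phi0_eq_hyp3F2_general {u : ℂ} (hu : ‖u‖ < 1) (v w : ℂ) {z : ℝ} (hz : |z| < 1) :
    Summable (fun p : ℕ × ℕ × ℕ =>
      (G0hz (p.1 + p.2.1 + 2 * p.2.2 + 2) (p.2.1 + p.2.2 + 1) (p.2.2 + 1) z : ℂ)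
        * u ^ p.1 * v ^ p.2.1 * w ^ p.2.2) ∧
    ∀ α β : ℂ, α + β = 1 - u / 2 + v / 2 → α * β = (1 - u + v - u * v + w) / 4 →
      ∑' p : ℕ × ℕ × ℕ,
          (G0hz (p.1 + p.2.1 + 2 * p.2.2 + 2) (p.2.1 + p.2.2 + 1) (p.2.2 + 1) z : ℂ)
            * u ^ p.1 * v ^ p.2.1 * w ^ p.2.2
        = z / (1 - u) * hyp3F2 α β 1 ((3 - u) / 2) (3 / 2) ((z : ℂ) ^ 2) :=
  have h := hasSum_G0hz hu v w hz
  ⟨h.summable, fun _ _ h_add h_mul =>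
    h.tsum_eq.trans (tsum_entrySum_eq_hyp3F2 hu h_add h_mul z)⟩

/-- Theorem 3.2: for `0 ≤ z < 1`,
`∑ G₀(k,n,s;z) u^{k-n-s} v^{n-s} w^{s-1} = (z/(1-u)) ⬝ ₃F₂(α, β, 1; (3-u)/2, 3/2; z²)`
where `α + β = 1 - u/2 + v/2` and `αβ = (1 - u + v - uv + w)/4`. -/
theorem phi0_eq_hyp3F2 :
    ∃ δ > (0 : ℝ), ∀ u v w : ℝ, |u| < δ → |v| < δ → |w| < δ →
      ∀ z : ℝ, 0 ≤ z → z < 1 →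
        Summable (fun p : ℕ × ℕ × ℕ =>
          G0hz (p.1 + p.2.1 + 2 * p.2.2 + 2) (p.2.1 + p.2.2 + 1) (p.2.2 + 1) z
            * u ^ p.1 * v ^ p.2.1 * w ^ p.2.2) ∧
        ∀ α β : ℂ, α + β = 1 - (u : ℂ) / 2 + (v : ℂ) / 2 →
          α * β = (1 - (u : ℂ) + (v : ℂ) - (u : ℂ) * (v : ℂ) + (w : ℂ)) / 4 →
          ((∑' p : ℕ × ℕ × ℕ,
              G0hz (p.1 + p.2.1 + 2 * p.2.2 + 2) (p.2.1 + p.2.2 + 1) (p.2.2 + 1) z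
                * u ^ p.1 * v ^ p.2.1 * w ^ p.2.2 : ℝ) : ℂ)
            = (z : ℂ) / (1 - (u : ℂ)) *
                hyp3F2 α β 1 ((3 - (u : ℂ)) / 2) (3 / 2) ((z : ℂ) ^ 2) := by
  refine ⟨1, one_pos, fun u v w hu _ _ z hz₀ hz₁ => ?_⟩
  exact_mod_cast phi0_eq_hyp3F2_general (u := u) (by simpa using hu) v w
    (abs_lt.2 ⟨by linarith, hz₁⟩)
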